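/- Let N ≥ 2, let Ω ⊂ ℝ^N be a bounded open set, let 0 < κ ≤ 1/4 and q > 1. Then there exists a constant C > 0, depending only on N, κ, q and Ω, such that every C² function u on Ω satisfying −Δu(x) − κ·u(x)/d(x)² + |u(x)|^{q−1}u(x) = 0 for all x ∈ Ω obeys the Keller–Osserman estimate |u(x)| ≤ C·d(x)^{−2/(q−1)} for every x ∈ Ω. -/

import Mathlib

/-!
Keller–Osserman by an interior barrier. Fix `x₀ ∈ Ω`, put `r = d(x₀)/2`, `a = 2/(q-1)` and
`φ(y) = r² - |y - x₀|²`. On the closed ball of radius `r` one has `d ≥ r`, so the Hardy potential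
is at most `κ/r²` there. If `u(x₀) > 0`, the function `u φ^a` has a positive interior maximum
`M`, attained at some `y`, and then `u - M φ^{-a}` has a local maximum at `y`. Comparing the
Laplacians of `u` and of `M φ^{-a}` at `y` (`laplacian_le_barrier`, done one coordinate direction
at a time) and using `a q = a + 2` gives `M^{q-1} ≤ K r²` with `K` depending only on `N, κ, q`,
hence `u(x₀) ≤ M r^{-2a} ≤ K^{1/(q-1)} r^{-a}` (`upper_bound`). The equation is odd in `u`, so the
same bound holds for `-u`.
-/

open MeasureTheory

/-- The Laplacian of `f` at `x`: the sum of the (pure) second partial derivatives. -/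
noncomputable def laplacian {N : ℕ} (f : EuclideanSpace ℝ (Fin N) → ℝ)
    (x : EuclideanSpace ℝ (Fin N)) : ℝ :=
  ∑ i : Fin N,
    iteratedFDeriv ℝ 2 f x ![EuclideanSpace.single i 1, EuclideanSpace.single i 1]

open Filter Topology

/-- Second-order necessary condition at a local maximum. -/
lemma second_deriv_nonpos {g g' : ℝ → ℝ} {c : ℝ} (h : ∀ᶠ t in 𝓝 0, HasDerivAt g (g' t) t)
    (h2 : HasDerivAt g' c 0) (hm : IsLocalMax g 0) : c ≤ 0 := by
  by_contra! hc
  have e1 : deriv g =ᶠ[𝓝 0] g' := h.mono fun t ht => ht.deriv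
  have e2 : deriv (deriv g) 0 = c := by rw [e1.deriv_eq, h2.deriv]
  have hmin : IsLocalMin g 0 :=
    isLocalMin_of_deriv_deriv_pos (by rw [e2]; exact hc) hm.deriv_eq_zero
      h.self_of_nhds.continuousAt
  -- A point that is both a local minimum and a local maximum is one of local constancy.
  have hconst : g =ᶠ[𝓝 0] fun _ => g 0 := by
    filter_upwards [hm, hmin] with t h1 h2 using le_antisymm h1 h2
  have h0 : deriv (deriv g) 0 = 0 := by
    rw [hconst.deriv.deriv_eq]; simp
  linarith

/-- The barrier `φ^{-a}` restricted to a line: `P t = A - 2Bt - t²` is `φ` along the line. -/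
lemma barrier_hasDerivAt (A B a t : ℝ) (h : 0 < A - 2 * B * t - t ^ 2) :
    HasDerivAt (fun t => (A - 2 * B * t - t ^ 2) ^ (-a))
      (2 * a * ((B + t) * (A - 2 * B * t - t ^ 2) ^ (-a - 1))) t := by
  have hP : HasDerivAt (fun t : ℝ => A - 2 * B * t - t ^ 2) (-(2 * B) - 2 * t) t := by
    have := (((hasDerivAt_id t).const_mul (2 * B)).const_sub A).sub ((hasDerivAt_id t).pow 2)
    refine this.congr_deriv ?_
    simp
  refine (hP.rpow_const (p := -a) (Or.inl h.ne')).congr_deriv ?_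
  ring

lemma barrier_hasDerivAt_two (A B a : ℝ) (h : 0 < A) :
    HasDerivAt (fun t => 2 * a * ((B + t) * (A - 2 * B * t - t ^ 2) ^ (-a - 1)))
      (A ^ (-a) * (4 * a * (a + 1) * B ^ 2 / A ^ 2 + 2 * a / A)) 0 := by
  have h1 := barrier_hasDerivAt A B (a + 1) 0 (by simpa using h)
  have h2 := ((((hasDerivAt_id (0 : ℝ)).const_add B).mul h1).const_mul (2 * a))
  have e : -(a + 1) = -a - 1 := by ring
  rw [e] at h2
  refine h2.congr_deriv ?_
  have e2 : A ^ (-a - 1) = A ^ (-a) / A := Real.rpow_sub_one h.ne' _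
  have e3 : A ^ (-a - 1 - 1) = A ^ (-a) / A / A := by rw [Real.rpow_sub_one h.ne', e2]
  simp only [mul_zero, sub_zero, add_zero, id, ne_eq, OfNat.ofNat_ne_zero, not_false_eq_true,
    zero_pow, e2, e3]
  field_simp
  ring

/-- If `u - M φ^{-a}` has a local maximum at `y`, where `φ = r² - |· - x₀|²`, then `Δu(y)` is at
most `M Δ(φ^{-a})(y)`, written out explicitly. -/
lemma laplacian_le_barrier {N : ℕ} (u : EuclideanSpace ℝ (Fin N) → ℝ)
    (x₀ y : EuclideanSpace ℝ (Fin N)) (r a M : ℝ) (hu : ContDiffAt ℝ 2 u y)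
    (hpos : 0 < r ^ 2 - ‖y - x₀‖ ^ 2)
    (hmax : IsLocalMax (fun z => u z - M * (r ^ 2 - ‖z - x₀‖ ^ 2) ^ (-a)) y) :
    laplacian u y ≤ M * (r ^ 2 - ‖y - x₀‖ ^ 2) ^ (-a) *
      (4 * a * (a + 1) * ‖y - x₀‖ ^ 2 / (r ^ 2 - ‖y - x₀‖ ^ 2) ^ 2
        + 2 * N * a / (r ^ 2 - ‖y - x₀‖ ^ 2)) := by
  set A := r ^ 2 - ‖y - x₀‖ ^ 2 with hA
  have key : ∀ i : Fin N,
      iteratedFDeriv ℝ 2 u y ![EuclideanSpace.single i 1, EuclideanSpace.single i 1] ≤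
      M * (A ^ (-a) * (4 * a * (a + 1) * ((y - x₀) i) ^ 2 / A ^ 2 + 2 * a / A)) := by
    intro i
    set e : EuclideanSpace ℝ (Fin N) := EuclideanSpace.single i 1 with he
    set B := (y - x₀) i with hB
    have hline : ∀ t : ℝ, HasDerivAt (fun t : ℝ => y + t • e) e t := fun t => by
      simpa using ((hasDerivAt_id t).smul_const e).const_add y
    have hcont : Tendsto (fun t : ℝ => y + t • e) (𝓝 0) (𝓝 y) := by
      have := (hline 0).continuousAt.tendsto
      simpa using this
    have hphi : ∀ t : ℝ, r ^ 2 - ‖y + t • e - x₀‖ ^ 2 = A - 2 * B * t - t ^ 2 := by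
      intro t
      have h1 : y + t • e - x₀ = (y - x₀) + t • e := by abel
      rw [h1, norm_add_sq_real, inner_smul_right, norm_smul, he, EuclideanSpace.inner_single_right]
      simp [hA, hB]
      ring
    have hP0 : ∀ᶠ t : ℝ in 𝓝 0, 0 < A - 2 * B * t - t ^ 2 := by
      have : ContinuousAt (fun t : ℝ => A - 2 * B * t - t ^ 2) 0 := by fun_prop
      exact this.eventually (lt_mem_nhds (by simpa using hpos))
    have hdiff : ∀ᶠ z in 𝓝 y, DifferentiableAt ℝ u z := by
      have h1 : ∀ᶠ z in 𝓝 y, ContDiffAt ℝ 2 u z := hu.eventually (by simp)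
      exact h1.mono fun z hz => hz.differentiableAt (by simp)
    have hd2 : HasFDerivAt (fderiv ℝ u) (fderiv ℝ (fderiv ℝ u) y) y := by
      have : ContDiffAt ℝ 1 (fderiv ℝ u) y := hu.fderiv_right (by norm_num)
      exact (this.differentiableAt (by simp)).hasFDerivAt
    have hg : ∀ᶠ t in 𝓝 (0 : ℝ), HasDerivAt
        (fun t : ℝ => u (y + t • e) - M * (A - 2 * B * t - t ^ 2) ^ (-a))
        (fderiv ℝ u (y + t • e) e
          - M * (2 * a * ((B + t) * (A - 2 * B * t - t ^ 2) ^ (-a - 1)))) t := by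
      filter_upwards [hP0, hcont.eventually hdiff] with t ht hdt
      exact (hdt.hasFDerivAt.comp_hasDerivAt t (hline t)).sub
        ((barrier_hasDerivAt A B a t ht).const_mul M)
    have hg2 : HasDerivAt (fun t : ℝ => fderiv ℝ u (y + t • e) e
          - M * (2 * a * ((B + t) * (A - 2 * B * t - t ^ 2) ^ (-a - 1))))
        (fderiv ℝ (fderiv ℝ u) y e e
          - M * (A ^ (-a) * (4 * a * (a + 1) * B ^ 2 / A ^ 2 + 2 * a / A))) 0 := by
      have hd2' : HasFDerivAt (fderiv ℝ u) (fderiv ℝ (fderiv ℝ u) y) (y + (0 : ℝ) • e) := by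
        simpa using hd2
      have h1 := hd2'.comp_hasDerivAt (0 : ℝ) (hline 0)
      have h2 := h1.clm_apply (hasDerivAt_const (0 : ℝ) e)
      refine HasDerivAt.sub ?_ ((barrier_hasDerivAt_two A B a hpos).const_mul M)
      simpa using h2
    have hm : IsLocalMax (fun t : ℝ => u (y + t • e) - M * (A - 2 * B * t - t ^ 2) ^ (-a)) 0 := by
      have h1 := hcont.eventually hmax
      filter_upwards [h1] with t ht
      have h0 := hphi 0
      simp only [hphi] at ht
      simpa [← hA] using ht
    have := second_deriv_nonpos hg hg2 hm
    rw [iteratedFDeriv_two_apply]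
    simp only [Matrix.cons_val_zero, Matrix.cons_val_one]
    linarith
  calc laplacian u y ≤ ∑ i : Fin N,
        M * (A ^ (-a) * (4 * a * (a + 1) * ((y - x₀) i) ^ 2 / A ^ 2 + 2 * a / A)) :=
        Finset.sum_le_sum fun i _ => key i
    _ = _ := by
        rw [EuclideanSpace.real_norm_sq_eq, ← Finset.mul_sum, ← Finset.mul_sum,
          Finset.sum_add_distrib, ← Finset.sum_div, ← Finset.mul_sum]
        simp
        ring

/-- One-sided interior estimate on a ball of radius `r` on which `d ≥ r`. -/
lemma upper_bound {N : ℕ} (Ω : Set (EuclideanSpace ℝ (Fin N))) (hΩo : IsOpen Ω)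
    (κ q : ℝ) (hκ0 : 0 < κ) (hq : 1 < q) (u : EuclideanSpace ℝ (Fin N) → ℝ)
    (hu : ContDiffOn ℝ 2 u Ω)
    (heq : ∀ x ∈ Ω, -laplacian u x - κ * u x / (Metric.infDist x Ωᶜ) ^ 2
            + |u x| ^ (q - 1) * u x = 0)
    (x₀ : EuclideanSpace ℝ (Fin N)) (r : ℝ) (hr : 0 < r)
    (hsub : Metric.closedBall x₀ r ⊆ Ω)
    (hd : ∀ y ∈ Metric.closedBall x₀ r, r ≤ Metric.infDist y Ωᶜ) :
    u x₀ ≤ (κ + 4 * (2 / (q - 1)) * (2 / (q - 1) + 1) + 2 * N * (2 / (q - 1))) ^ (1 / (q - 1))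
      * r ^ (-(2 / (q - 1))) := by
  have hq0 : 0 < q - 1 := by linarith
  set a := 2 / (q - 1) with ha
  have ha0 : 0 < a := by positivity
  have haq : a * (q - 1) = 2 := by rw [ha]; field_simp
  set K := κ + 4 * a * (a + 1) + 2 * N * a with hK
  have hK0 : 0 < K := by positivity
  rcases le_or_gt (u x₀) 0 with hneg | hx0
  · exact hneg.trans (by positivity)
  have hx₀mem : x₀ ∈ Metric.closedBall x₀ r := Metric.mem_closedBall_self hr.le
  have hcontw : ContinuousOn (fun y => u y * (r ^ 2 - ‖y - x₀‖ ^ 2) ^ a)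
      (Metric.closedBall x₀ r) := by
    refine (hu.continuousOn.mono hsub).mul ?_
    refine ContinuousOn.rpow_const (by fun_prop) fun _ _ => Or.inr ha0.le
  obtain ⟨y, hy, hymax⟩ := (isCompact_closedBall x₀ r).exists_isMaxOn ⟨x₀, hx₀mem⟩ hcontw
  set M := u y * (r ^ 2 - ‖y - x₀‖ ^ 2) ^ a with hM
  have hMx : u x₀ * (r ^ 2) ^ a ≤ M := by simpa using hymax hx₀mem
  have hM0 : 0 < M := lt_of_lt_of_le (by positivity) hMx
  set s := r ^ 2 - ‖y - x₀‖ ^ 2 with hs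
  have hyr : ‖y - x₀‖ ≤ r := by simpa [dist_eq_norm] using hy
  have hs0 : 0 < s := by
    have h0 : 0 ≤ s := by
      have := pow_le_pow_left₀ (norm_nonneg _) hyr 2
      linarith
    rcases h0.eq_or_lt with h | h
    · rw [← h, Real.zero_rpow ha0.ne', mul_zero] at hM
      linarith
    · exact h
  have hylt : ‖y - x₀‖ < r := by
    by_contra! h
    have := pow_le_pow_left₀ hr.le h 2
    linarith
  have hyΩ : y ∈ Ω := hsub hy
  have huy : u y = M * s ^ (-a) := by
    rw [hM, mul_assoc, ← Real.rpow_add hs0]; simp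
  have huy0 : 0 < u y := by rw [huy]; positivity
  have hlocmax : IsLocalMax (fun z => u z - M * (r ^ 2 - ‖z - x₀‖ ^ 2) ^ (-a)) y := by
    have hball : Metric.ball x₀ r ∈ 𝓝 y :=
      Metric.isOpen_ball.mem_nhds (by simpa [dist_eq_norm] using hylt)
    filter_upwards [hball] with z hz
    have hz' : ‖z - x₀‖ < r := by simpa [dist_eq_norm] using hz
    have hz0 : 0 < r ^ 2 - ‖z - x₀‖ ^ 2 := by
      have := pow_lt_pow_left₀ hz' (norm_nonneg _) two_ne_zero
      linarith
    have h1 : u z * (r ^ 2 - ‖z - x₀‖ ^ 2) ^ a ≤ M := hymax (Metric.ball_subset_closedBall hz)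
    have h2 : u z ≤ M * (r ^ 2 - ‖z - x₀‖ ^ 2) ^ (-a) := by
      rw [Real.rpow_neg hz0.le, ← div_eq_mul_inv, le_div_iff₀ (by positivity)]
      exact h1
    simp only [← hs, ← huy]
    linarith
  have hlap := laplacian_le_barrier u x₀ y r a M (hu.contDiffAt (hΩo.mem_nhds hyΩ)) hs0 hlocmax
  rw [← hs, ← huy] at hlap
  have hE := heq y hyΩ
  rw [abs_of_pos huy0] at hE
  set d := Metric.infDist y Ωᶜ with hdd
  have hrd : r ≤ d := hd y hy
  have hd0 : 0 < d := hr.trans_le hrd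
  have hdiv : u y ^ (q - 1) ≤ κ / d ^ 2 + (4 * a * (a + 1) * ‖y - x₀‖ ^ 2 / s ^ 2
      + 2 * N * a / s) := by
    refine le_of_mul_le_mul_left ?_ huy0
    have : κ * u y / d ^ 2 = u y * (κ / d ^ 2) := by ring
    rw [mul_add]
    linarith
  have hpow : u y ^ (q - 1) = M ^ (q - 1) / s ^ 2 := by
    rw [huy, Real.mul_rpow hM0.le (by positivity), ← Real.rpow_mul hs0.le, neg_mul, haq,
      Real.rpow_neg hs0.le, Real.rpow_two, div_eq_mul_inv]
  have hsr : s ≤ r ^ 2 := by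
    have := sq_nonneg ‖y - x₀‖
    linarith
  have hMK : M ^ (q - 1) ≤ K * r ^ 2 := by
    rw [hpow, div_le_iff₀ (by positivity)] at hdiv
    have e : (κ / d ^ 2 + (4 * a * (a + 1) * ‖y - x₀‖ ^ 2 / s ^ 2 + 2 * N * a / s)) * s ^ 2
        = κ * (s ^ 2 / d ^ 2) + 4 * a * (a + 1) * ‖y - x₀‖ ^ 2 + 2 * N * a * s := by
      field_simp
      ring
    rw [e] at hdiv
    have h1 : s ^ 2 / d ^ 2 ≤ r ^ 2 := by
      rw [div_le_iff₀ (by positivity)]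
      calc s ^ 2 ≤ (r ^ 2) ^ 2 := by gcongr
        _ = r ^ 2 * r ^ 2 := by ring
        _ ≤ r ^ 2 * d ^ 2 := by gcongr
    calc M ^ (q - 1) ≤ _ := hdiv
      _ ≤ κ * r ^ 2 + 4 * a * (a + 1) * r ^ 2 + 2 * N * a * r ^ 2 := by gcongr
      _ = K * r ^ 2 := by rw [hK]; ring
  have hMr : M ≤ K ^ (1 / (q - 1)) * r ^ a := by
    have h1 : M = (M ^ (q - 1)) ^ (1 / (q - 1)) := by
      rw [← Real.rpow_mul hM0.le, mul_one_div_cancel hq0.ne', Real.rpow_one]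
    have h2 : r ^ a = (r ^ 2) ^ (1 / (q - 1)) := by
      rw [← Real.rpow_two, ← Real.rpow_mul hr.le, ha, mul_one_div]
    rw [h1, h2, ← Real.mul_rpow hK0.le (by positivity)]
    exact Real.rpow_le_rpow (by positivity) hMK (by positivity)
  have hr2 : (r ^ 2) ^ a = r ^ a * r ^ a := by rw [sq, Real.mul_rpow hr.le hr.le]
  rw [hr2] at hMx
  have hra : 0 < r ^ a := by positivity
  rw [Real.rpow_neg hr.le, ← div_eq_mul_inv, le_div_iff₀ hra]
  refine le_of_mul_le_mul_right ?_ hra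
  linarith

/-- the Keller–Osserman estimate `|u(x)| ≤ C d(x)^{-2/(q-1)}` for solutions of
`-Δu - κ u/d² + |u|^{q-1}u = 0` in a bounded open set `Ω`. -/
theorem stmt_3 {N : ℕ} (hN : 2 ≤ N)
    (Ω : Set (EuclideanSpace ℝ (Fin N))) (hΩo : IsOpen Ω) (hΩb : Bornology.IsBounded Ω)
    (κ q : ℝ) (hκ0 : 0 < κ) (hκ1 : κ ≤ 1 / 4) (hq : 1 < q) :
    ∃ C : ℝ, 0 < C ∧
      ∀ u : EuclideanSpace ℝ (Fin N) → ℝ, ContDiffOn ℝ 2 u Ω →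
        (∀ x ∈ Ω,
          -laplacian u x - κ * u x / (Metric.infDist x Ωᶜ) ^ 2
            + |u x| ^ (q - 1) * u x = 0) →
        ∀ x ∈ Ω, |u x| ≤ C * (Metric.infDist x Ωᶜ) ^ (-(2 / (q - 1))) := by
  have hq0 : 0 < q - 1 := by linarith
  set a := 2 / (q - 1) with ha
  have ha0 : 0 < a := by positivity
  set K := κ + 4 * a * (a + 1) + 2 * N * a with hK
  have hK0 : 0 < K := by positivity
  refine ⟨K ^ (1 / (q - 1)) * 2 ^ a, by positivity, fun u hu heq x hx => ?_⟩
  have : Nonempty (Fin N) := ⟨⟨0, by omega⟩⟩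
  -- Boundedness enters only here: it makes the complement nonempty, so that `d > 0` in `Ω`.
  have hne : Ωᶜ.Nonempty := by
    rw [Set.nonempty_compl]
    rintro rfl
    exact NormedSpace.unbounded_univ ℝ (EuclideanSpace ℝ (Fin N)) hΩb
  have hd0 : 0 < Metric.infDist x Ωᶜ :=
    (hΩo.isClosed_compl.notMem_iff_infDist_pos hne).1 (by simpa using hx)
  set d := Metric.infDist x Ωᶜ with hd
  have hdball : ∀ y ∈ Metric.closedBall x (d / 2), d / 2 ≤ Metric.infDist y Ωᶜ := by
    intro y hy
    have h1 : d ≤ Metric.infDist y Ωᶜ + dist x y := Metric.infDist_le_infDist_add_dist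
    have h2 : dist x y ≤ d / 2 := by rw [dist_comm]; exact hy
    linarith
  have hsub : Metric.closedBall x (d / 2) ⊆ Ω := by
    intro y hy
    by_contra hyn
    have h1 := hdball y hy
    rw [Metric.infDist_zero_of_mem (show y ∈ Ωᶜ from hyn)] at h1
    linarith
  have e : K ^ (1 / (q - 1)) * 2 ^ a * d ^ (-a) = K ^ (1 / (q - 1)) * (d / 2) ^ (-a) := by
    rw [Real.div_rpow hd0.le zero_le_two, Real.rpow_neg zero_le_two, div_inv_eq_mul]
    ring
  rw [e, abs_le']
  refine ⟨upper_bound Ω hΩo κ q hκ0 hq u hu heq x (d / 2) (by positivity) hsub hdball, ?_⟩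
  refine upper_bound Ω hΩo κ q hκ0 hq (fun z => -u z) hu.neg (fun z hz => ?_) x (d / 2)
    (by positivity) hsub hdball
  have hl : laplacian (fun z => -u z) z = -laplacian u z := by
    unfold laplacian
    rw [← Finset.sum_neg_distrib]
    refine Finset.sum_congr rfl fun i _ => ?_
    have : (fun z => -u z) = -u := rfl
    rw [this, iteratedFDeriv_neg]
    rfl
  have := heq z hz
  rw [hl, abs_neg]
  linear_combination -this
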